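/- Let G be a strongly Gorenstein (L,A)-projective module, GP the class of Gorenstein (L,A)-projective modules. Then ^⊥(G^⊥) ⊆ GP, G^⊥ ⊇ GP^⊥, and GP ∩ GP^⊥ = 𝓟 = ^⊥(G^⊥) ∩ G^⊥, where 𝓟 is the class of projective modules. -/

import Mathlib

/-!
The two cotorsion pairs are handled through Ext-vanishing and the periodic sequence
`0 → G → P → G → 0` given by strong Gorenstein projectivity; write `i : G ⟶ P` for the inclusion,
`ℬ = G^⊥` and `𝒜 = ^⊥(G^⊥)`. A module `N` lies in `ℬ` iff every map `G ⟶ N` extends along `i`.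
The hypothesis on `G` says `𝓛 ⊆ ℬ`, and `𝓛` contains the projectives since it contains `R` and is
closed under direct sums and summands (`projective_mem`).

* Periodicity makes `ℬ` closed under kernels of epimorphisms between its members
  (`extVanish_kernel`) and under cokernels of monomorphisms into injectives
  (`extVanish_cokernel_injective`). By the first, a projective presentation of any
  `X ∈ 𝒜 ∩ ℬ` splits, so `X` is projective (`projective_of_leftPerp_inter`); by the second,
  `𝒜` is closed under syzygies (`leftPerp_syzygy`).
* The small object argument applied to the single monomorphism `i` embeds any module `X` in some
  `B ∈ ℬ` with cokernel in `𝒜` (`exists_special_preenvelope`). If `X ∈ 𝒜` then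
  `B ∈ 𝒜 ∩ ℬ` is projective.
* So every module of `𝒜` is both a syzygy and a cosyzygy of modules of `𝒜`. Splicing gives a doubly
  infinite exact complex of projectives, which is `Hom(-, 𝓛)`-exact because `𝓛 ⊆ ℬ`
  (`isGProj_of_class`). Hence `𝒜 ⊆ GP`. The same splicing gives `G ∈ GP`, so `GP^⊥ ⊆ ℬ`,
  and shows that projectives are in `GP`.
* A module `X ∈ GP ∩ GP^⊥` embeds in a projective with cokernel in `GP`; this embedding splits, so
  `X` is projective. Conversely projectives lie in `𝓛`, which `GP` is left orthogonal to
  (`IsGProj.extVanish`).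
-/

open CategoryTheory CategoryTheory.Limits DirectSum

namespace DualityPaper

variable {R : Type} [Ring R]

/-- The right `R`-module structure on the group of additive maps out of a left `R`-module,
given by `(f • r) m = f (r • m)`. -/
instance charModuleRight (M A : Type) [AddCommGroup M] [AddCommGroup A] [Module R M] :
    Module Rᵐᵒᵖ (M →+ A) where
  smul r f := f.comp (DistribMulAction.toAddMonoidHom M r.unop)
  one_smul f := AddMonoidHom.ext fun m => by
    show f ((1 : Rᵐᵒᵖ).unop • m) = f m
    simp
  mul_smul r s f := AddMonoidHom.ext fun m => by
    show f ((r * s).unop • m) = f (s.unop • r.unop • m)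
    rw [MulOpposite.unop_mul, mul_smul]
  smul_zero r := rfl
  smul_add r f g := rfl
  add_smul r s f := AddMonoidHom.ext fun m => by
    show f ((r + s).unop • m) = f (r.unop • m) + f (s.unop • m)
    rw [MulOpposite.unop_add, add_smul, map_add]
  zero_smul f := AddMonoidHom.ext fun m => by
    show f ((0 : Rᵐᵒᵖ).unop • m) = 0
    simp

/-- The left `R`-module structure on the group of additive maps out of a right `R`-module. -/
instance charModuleLeft (N A : Type) [AddCommGroup N] [AddCommGroup A] [Module Rᵐᵒᵖ N] :
    Module R (N →+ A) where
  smul r f := f.comp (DistribMulAction.toAddMonoidHom N (MulOpposite.op r))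
  one_smul f := AddMonoidHom.ext fun m => by
    show f ((MulOpposite.op (1 : R)) • m) = f m
    simp
  mul_smul r s f := AddMonoidHom.ext fun m => by
    show f (MulOpposite.op (r * s) • m) = f (MulOpposite.op s • MulOpposite.op r • m)
    rw [MulOpposite.op_mul, mul_smul]
  smul_zero r := rfl
  smul_add r f g := rfl
  add_smul r s f := AddMonoidHom.ext fun m => by
    show f (MulOpposite.op (r + s) • m) = f (MulOpposite.op r • m) + f (MulOpposite.op s • m)
    rw [MulOpposite.op_add, add_smul, map_add]
  zero_smul f := AddMonoidHom.ext fun m => by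
    show f (MulOpposite.op (0 : R) • m) = 0
    simp

/-- The character module `M⁺ = Hom_ℤ(M, ℚ/ℤ)` of a left module, as a right module. -/
def charL (M : ModuleCat.{0} R) : ModuleCat.{0} Rᵐᵒᵖ :=
  ModuleCat.of Rᵐᵒᵖ (M →+ AddCircle (1 : ℚ))

/-- The character module `N⁺ = Hom_ℤ(N, ℚ/ℤ)` of a right module, as a left module. -/
def charR (N : ModuleCat.{0} Rᵐᵒᵖ) : ModuleCat.{0} R :=
  ModuleCat.of R (N →+ AddCircle (1 : ℚ))

/-- A left module over a (possibly noncommutative) ring is flat iff its character module is an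
injective right module (Lambek); we take this as the definition of flatness. -/
def IsFlatMod (M : ModuleCat.{0} R) : Prop := CategoryTheory.Injective (charL M)

/-- `f`, `g` form a short exact sequence `0 → A → B → C → 0`. -/
def SES {A B C : ModuleCat.{0} R} (f : A ⟶ B) (g : B ⟶ C) : Prop :=
  ∃ w : f ≫ g = 0, (ShortComplex.mk f g w).ShortExact

/-- Vanishing of `Ext^n_R(M, N)`. -/
def ExtVanish (n : ℕ) (M N : ModuleCat.{0} R) : Prop :=
  Subsingleton (((_root_.Ext ℤ (ModuleCat.{0} R) n).obj (Opposite.op M)).obj N)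

/-- A complete duality pair `(𝓛, 𝓐)` over `R`. -/
structure CompleteDualityPair (𝓛 : Set (ModuleCat.{0} R)) (𝓐 : Set (ModuleCat.{0} Rᵐᵒᵖ)) :
    Prop where
  isoClosed_L : ∀ {M N : ModuleCat.{0} R}, (M ≅ N) → M ∈ 𝓛 → N ∈ 𝓛
  isoClosed_A : ∀ {M N : ModuleCat.{0} Rᵐᵒᵖ}, (M ≅ N) → M ∈ 𝓐 → N ∈ 𝓐
  char_mem_iff : ∀ M : ModuleCat.{0} R, M ∈ 𝓛 ↔ charL M ∈ 𝓐
  char_mem_iff' : ∀ N : ModuleCat.{0} Rᵐᵒᵖ, N ∈ 𝓐 ↔ charR N ∈ 𝓛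
  summands_A : ∀ A ∈ 𝓐, ∀ (B : ModuleCat.{0} Rᵐᵒᵖ) (i : B ⟶ A) (p : A ⟶ B),
    i ≫ p = 𝟙 B → B ∈ 𝓐
  sums_A : ∀ A B : ModuleCat.{0} Rᵐᵒᵖ, A ∈ 𝓐 → B ∈ 𝓐 → ModuleCat.of Rᵐᵒᵖ (A × B) ∈ 𝓐
  summands_L : ∀ L ∈ 𝓛, ∀ (K : ModuleCat.{0} R) (i : K ⟶ L) (p : L ⟶ K),
    i ≫ p = 𝟙 K → K ∈ 𝓛
  sums_L : ∀ L K : ModuleCat.{0} R, L ∈ 𝓛 → K ∈ 𝓛 → ModuleCat.of R (L × K) ∈ 𝓛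
  self_mem : ModuleCat.of R R ∈ 𝓛
  coprod_L : ∀ (ι : Type) (f : ι → ModuleCat.{0} R), (∀ i, f i ∈ 𝓛) →
    ModuleCat.of R (⨁ i, f i) ∈ 𝓛
  ext_L : ∀ {A B C : ModuleCat.{0} R} (f : A ⟶ B) (g : B ⟶ C),
    SES f g → A ∈ 𝓛 → C ∈ 𝓛 → B ∈ 𝓛

/-- A doubly infinite exact sequence of projectives which stays exact after applying
`Hom_R(-, T)` for every `T` in the class `𝓣`. -/
structure IsTotallyAcyclicWrt (𝓣 : Set (ModuleCat.{0} R))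
    (C : ChainComplex (ModuleCat.{0} R) ℤ) : Prop where
  projective : ∀ n, Projective (C.X n)
  exact : ∀ n, (C.sc n).Exact
  homExact : ∀ T ∈ 𝓣, ∀ (n : ℤ) (g : C.X n ⟶ T), C.d (n + 1) n ≫ g = 0 →
    ∃ h : C.X (n - 1) ⟶ T, C.d n (n - 1) ≫ h = g

/-- `M` is Gorenstein projective relative to the class `𝓣`:  it is a kernel in a
`Hom_R(-, 𝓣)`-exact exact sequence of projective modules. -/
def IsGProj (𝓣 : Set (ModuleCat.{0} R)) (M : ModuleCat.{0} R) : Prop :=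
  ∃ C : ChainComplex (ModuleCat.{0} R) ℤ, IsTotallyAcyclicWrt 𝓣 C ∧
    ∃ n : ℤ, Nonempty (M ≅ kernel (C.d n (n - 1)))

/-- `M` is strongly Gorenstein `(𝓛,𝓐)`-projective. -/
def IsSGProj (𝓣 : Set (ModuleCat.{0} R)) (M : ModuleCat.{0} R) : Prop :=
  ∃ (P : ModuleCat.{0} R) (f : P ⟶ P), Projective P ∧
    (∃ w : f ≫ f = 0, (ShortComplex.mk f f w).Exact) ∧
    (∀ T ∈ 𝓣, ∀ g : P ⟶ T, f ≫ g = 0 → ∃ h : P ⟶ T, f ≫ h = g) ∧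
    Nonempty (M ≅ kernel f)

/-- Resolution dimension of `M` with respect to a class `𝓒` is at most `n`. -/
def ResDimLE (𝓒 : Set (ModuleCat.{0} R)) : ℕ → ModuleCat.{0} R → Prop
  | 0, M => M ∈ 𝓒
  | n + 1, M => ∃ (K C : ModuleCat.{0} R) (f : K ⟶ C) (g : C ⟶ M),
      C ∈ 𝓒 ∧ SES f g ∧ ResDimLE 𝓒 n K

/-- `K` is an `n`-th kernel of an exact sequence `0 → K → C_{n-1} → ⋯ → C₀ → M → 0`
with all `Cᵢ` in `𝓒`. -/
def IsNthSyzygy (𝓒 : Set (ModuleCat.{0} R)) : ℕ → ModuleCat.{0} R → ModuleCat.{0} R → Prop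
  | 0, M, K => Nonempty (K ≅ M)
  | n + 1, M, K => ∃ (S C : ModuleCat.{0} R) (f : S ⟶ C) (g : C ⟶ M),
      C ∈ 𝓒 ∧ SES f g ∧ IsNthSyzygy 𝓒 n S K

/-- A left Frobenius pair `(𝓧, ω)`. -/
structure LeftFrobeniusPair (𝓧 ω : Set (ModuleCat.{0} R)) : Prop where
  summands_X : ∀ X ∈ 𝓧, ∀ (Y : ModuleCat.{0} R) (i : Y ⟶ X) (p : X ⟶ Y),
    i ≫ p = 𝟙 Y → Y ∈ 𝓧
  extensions_X : ∀ {A B C : ModuleCat.{0} R} (f : A ⟶ B) (g : B ⟶ C),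
    SES f g → A ∈ 𝓧 → C ∈ 𝓧 → B ∈ 𝓧
  kerEpi_X : ∀ {A B C : ModuleCat.{0} R} (f : A ⟶ B) (g : B ⟶ C),
    SES f g → B ∈ 𝓧 → C ∈ 𝓧 → A ∈ 𝓧
  subset : ω ⊆ 𝓧
  inj : ∀ X ∈ 𝓧, ∀ W ∈ ω, ∀ i : ℕ, 1 ≤ i → ExtVanish i X W
  cogen : ∀ X ∈ 𝓧, ∃ (W X' : ModuleCat.{0} R) (f : X ⟶ W) (g : W ⟶ X'),
    W ∈ ω ∧ X' ∈ 𝓧 ∧ SES f g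
  summands_ω : ∀ W ∈ ω, ∀ (V : ModuleCat.{0} R) (i : V ⟶ W) (p : W ⟶ V),
    i ≫ p = 𝟙 V → V ∈ ω



/-! ### Vanishing of `Ext¹` as an extension problem -/

/-- `ExtVanish` is defined by derived functors, so it can be read off any projective resolution. -/
lemma extVanish_iff_cocycle {M : ModuleCat.{0} R} (P : ProjectiveResolution M)
    (N : ModuleCat.{0} R) : ExtVanish 1 M N ↔
      ∀ u : P.complex.X 1 ⟶ N, P.complex.d 2 1 ≫ u = 0 →
        ∃ v : P.complex.X 0 ⟶ N, P.complex.d 1 0 ≫ v = u := by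
  have e := (P.isoExt (R := ℤ) 1 N).toLinearEquiv.toEquiv
  unfold ExtVanish
  rw [e.subsingleton_congr, ← ModuleCat.isZero_iff_subsingleton,
    ← HomologicalComplex.exactAt_iff_isZero_homology,
    HomologicalComplex.exactAt_iff' _ 0 1 2 (by simp) (by simp),
    ShortComplex.moduleCat_exact_iff]
  rfl

lemma extVanish_extend {K Q M N : ModuleCat.{0} R} {k : K ⟶ Q} {q : Q ⟶ M} (h : SES k q)
    (hN : Subsingleton (Abelian.Ext.{0} M N 1)) (u : K ⟶ N) : ∃ v : Q ⟶ N, k ≫ v = u := by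
  obtain ⟨w, hS⟩ := h
  obtain ⟨x, hx⟩ := Abelian.Ext.contravariant_sequence_exact₁ hS N (Abelian.Ext.mk₀ u)
    (add_zero 1) (Subsingleton.elim _ _)
  obtain ⟨v, rfl⟩ := (Abelian.Ext.mk₀_bijective _ _).2 x
  refine ⟨v, (Abelian.Ext.mk₀_bijective _ _).1 ?_⟩
  rw [← hx, Abelian.Ext.mk₀_comp_mk₀]

/-- For a presentation of `M` with projective middle term, `Ext¹(M, N)` is the cokernel of
restriction `Hom(Q, N) → Hom(K, N)`. -/
lemma subsingleton_of_extend {K Q M N : ModuleCat.{0} R} {k : K ⟶ Q} {q : Q ⟶ M} (h : SES k q)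
    [Projective Q] (hN : ∀ u : K ⟶ N, ∃ v : Q ⟶ N, k ≫ v = u) :
    Subsingleton (Abelian.Ext.{0} M N 1) := by
  obtain ⟨w, hS⟩ := h
  refine subsingleton_of_forall_eq 0 fun e => ?_
  obtain ⟨x, rfl⟩ := Abelian.Ext.contravariant_sequence_exact₃ hS N e
    (Abelian.Ext.eq_zero_of_projective _) (add_zero 1)
  obtain ⟨u, rfl⟩ := (Abelian.Ext.mk₀_bijective _ _).2 x
  obtain ⟨v, rfl⟩ := hN u
  rw [← Abelian.Ext.mk₀_comp_mk₀]
  exact hS.extClass_comp_assoc _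


lemma ses_kernel {Q M : ModuleCat.{0} R} (q : Q ⟶ M) [Epi q] : SES (kernel.ι q) q :=
  ⟨kernel.condition q, { exact := ShortComplex.exact_of_f_is_kernel _ (kernelIsKernel q) }⟩

/-- The derived-functor `Ext¹` vanishes iff the one defined through the derived category does. Both
are compared with the extension problem along `ker q ⟶ P₀`, for `q : P₀ ⟶ M` the augmentation of a
projective resolution. -/
lemma extVanish_iff (M N : ModuleCat.{0} R) :
    ExtVanish 1 M N ↔ Subsingleton (Abelian.Ext.{0} M N 1) := by
  let P := projectiveResolution M
  rw [extVanish_iff_cocycle P N]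
  let q : P.complex.X 0 ⟶ M := P.π.f 0
  have : Epi q := inferInstanceAs (Epi (P.π.f 0))
  have w : P.complex.d 1 0 ≫ q = 0 := P.complex_d_comp_π_f_zero
  have ex : (ShortComplex.mk _ _ w).Exact := P.exact₀
  let c : P.complex.X 1 ⟶ kernel q := kernel.lift q (P.complex.d 1 0) w
  have hc : c ≫ kernel.ι q = P.complex.d 1 0 := kernel.lift_ι _ _ _
  have : Epi c := ex.epi_kernelLift
  have w' : P.complex.d 2 1 ≫ c = 0 := by
    rw [← cancel_mono (kernel.ι q), Category.assoc, hc]; simp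
  have ex' : (ShortComplex.mk _ _ w').Exact := by
    let φ : ShortComplex.mk _ _ w' ⟶ ShortComplex.mk _ _ (P.complex.d_comp_d 2 1 0) :=
      { τ₁ := 𝟙 _, τ₂ := 𝟙 _, τ₃ := kernel.ι q }
    have : Epi φ.τ₁ := inferInstanceAs (Epi (𝟙 _))
    have : IsIso φ.τ₂ := inferInstanceAs (IsIso (𝟙 _))
    have : Mono φ.τ₃ := inferInstanceAs (Mono (kernel.ι q))
    exact (ShortComplex.exact_iff_of_epi_of_isIso_of_mono φ).2 (P.exact_succ 0)
  have : Projective (P.complex.X 0) := P.projective 0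
  constructor
  · intro h
    refine subsingleton_of_extend (ses_kernel q) fun u => ?_
    obtain ⟨v, hv⟩ := h (c ≫ u) (by rw [reassoc_of% w', zero_comp])
    exact ⟨v, by rw [← cancel_epi c, ← Category.assoc, hc, hv]⟩
  · intro h u hu
    have : Epi (ShortComplex.mk _ _ w').g := inferInstanceAs (Epi c)
    obtain ⟨v, hv⟩ := extVanish_extend (ses_kernel q) h (ex'.desc u hu)
    exact ⟨v, by rw [← hc, Category.assoc, hv]; exact ex'.g_desc u hu⟩

lemma extVanish_iff_extend {K Q M N : ModuleCat.{0} R} {k : K ⟶ Q} {q : Q ⟶ M} (h : SES k q)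
    (hQ : Projective Q) :
    ExtVanish 1 M N ↔ ∀ u : K ⟶ N, ∃ v : Q ⟶ N, k ≫ v = u := by
  rw [extVanish_iff]
  exact ⟨fun hN => extVanish_extend h hN, fun hN => subsingleton_of_extend h hN⟩

lemma SES.mono {A B C : ModuleCat.{0} R} {f : A ⟶ B} {g : B ⟶ C} (h : SES f g) : Mono f :=
  h.2.mono_f
lemma SES.epi {A B C : ModuleCat.{0} R} {f : A ⟶ B} {g : B ⟶ C} (h : SES f g) : Epi g :=
  h.2.epi_g
lemma SES.zero {A B C : ModuleCat.{0} R} {f : A ⟶ B} {g : B ⟶ C} (h : SES f g) : f ≫ g = 0 :=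
  h.1
lemma SES.lift {A B C T : ModuleCat.{0} R} {f : A ⟶ B} {g : B ⟶ C} (h : SES f g)
    (t : T ⟶ B) (ht : t ≫ g = 0) : ∃ s : T ⟶ A, s ≫ f = t := by
  have := h.2.mono_f
  exact ⟨h.2.exact.lift t ht, h.2.exact.lift_f t ht⟩
lemma SES.desc {A B C T : ModuleCat.{0} R} {f : A ⟶ B} {g : B ⟶ C} (h : SES f g)
    (t : B ⟶ T) (ht : f ≫ t = 0) : ∃ s : C ⟶ T, g ≫ s = t := by
  have := h.2.epi_g
  exact ⟨h.2.exact.desc t ht, h.2.exact.g_desc t ht⟩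

lemma exists_presentation (M : ModuleCat.{0} R) :
    ∃ (K P : ModuleCat.{0} R) (k : K ⟶ P) (p : P ⟶ M), Projective P ∧ SES k p :=
  ⟨_, _, _, _, Projective.projective_over M, ses_kernel (Projective.π M)⟩

lemma extVanish_of_projective {P N : ModuleCat.{0} R} (hP : Projective P) : ExtVanish 1 P N := by
  rw [extVanish_iff]
  exact Abelian.Ext.subsingleton_of_projective P N 0

lemma exists_section {A B C : ModuleCat.{0} R} {f : A ⟶ B} {g : B ⟶ C} (h : SES f g)
    (hv : ExtVanish 1 C A) : ∃ s : C ⟶ B, s ≫ g = 𝟙 C := by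
  obtain ⟨r, hr⟩ := extVanish_extend h ((extVanish_iff _ _).1 hv) (𝟙 A)
  obtain ⟨s, hs⟩ := h.desc (𝟙 B - r ≫ f) (by simp [reassoc_of% hr])
  refine ⟨s, ?_⟩
  have := h.epi
  rw [← cancel_epi g, reassoc_of% hs]
  simp [h.zero]

lemma exists_retraction {A B C : ModuleCat.{0} R} {f : A ⟶ B} {g : B ⟶ C} (h : SES f g)
    (hv : ExtVanish 1 C A) : ∃ r : B ⟶ A, f ≫ r = 𝟙 A :=
  extVanish_extend h ((extVanish_iff _ _).1 hv) (𝟙 A)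

lemma projective_of_retract {X P : ModuleCat.{0} R} (hP : Projective P) (i : X ⟶ P) (r : P ⟶ X)
    (h : i ≫ r = 𝟙 X) : Projective X :=
  Retract.projective ⟨i, r, h⟩

/-! ### Projectives lie in `𝓛` -/

/-- `𝓛` contains every projective, as a direct summand of a free module. -/
lemma projective_mem {𝓛 : Set (ModuleCat.{0} R)} {𝓐 : Set (ModuleCat.{0} Rᵐᵒᵖ)}
    (hdp : CompleteDualityPair 𝓛 𝓐) {P : ModuleCat.{0} R} (hP : Projective P) : P ∈ 𝓛 := by
  classical
  let g : (⨁ _ : P, ModuleCat.of R R) →ₗ[R] P :=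
    DirectSum.toModule R P P fun x => LinearMap.toSpanSingleton R P x
  let p : ModuleCat.of R (⨁ _ : P, ModuleCat.of R R) ⟶ P := ModuleCat.ofHom g
  have : Epi p := by
    rw [ModuleCat.epi_iff_surjective]
    intro x
    refine ⟨DirectSum.lof R P (fun _ => ModuleCat.of R R) x (1 : R), ?_⟩
    change g _ = x
    simp only [g, DirectSum.toModule_lof]
    exact one_smul R x
  exact hdp.summands_L _ (hdp.coprod_L P (fun _ => ModuleCat.of R R) fun _ => hdp.self_mem) P
    (Projective.factorThru (𝟙 P) p) p (Projective.factorThru_comp _ _)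

/-! ### Splicing short exact sequences; Gorenstein projectives -/

/-- A relation that is total on both sides admits a `ℤ`-indexed chain through any given point. -/
lemma exists_int_sequence {α : Type*} (r : α → α → Prop) (hl : ∀ a, ∃ b, r b a)
    (hr : ∀ a, ∃ b, r a b) (x : α) : ∃ s : ℤ → α, s 0 = x ∧ ∀ n, r (s (n + 1)) (s n) := by
  choose nxt hn using hl
  choose prv hp using hr
  let s : ℤ → α := fun n => match n with
    | Int.ofNat n => nxt^[n] x
    | Int.negSucc n => prv^[n + 1] x
  refine ⟨s, rfl, fun n => ?_⟩
  match n with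
  | Int.ofNat n =>
    change r (nxt^[n + 1] x) (nxt^[n] x)
    rw [Function.iterate_succ_apply']
    exact hn _
  | Int.negSucc 0 => exact hp x
  | Int.negSucc (n + 1) =>
    change r (prv^[n + 1] x) (prv^[n + 1 + 1] x)
    rw [Function.iterate_succ_apply' prv (n + 1)]
    exact hp _

lemma SES.kernel_iso {A B C D : ModuleCat.{0} R} {f : A ⟶ B} {g : B ⟶ C} (h : SES f g)
    (m : C ⟶ D) [Mono m] : Nonempty (A ≅ kernel (g ≫ m)) :=
  ⟨h.2.fIsKernel.conePointUniqueUpToIso (kernelIsKernel g) ≪≫ (kernelCompMono g m).symm⟩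

/-- Precomposing the first map with an epimorphism and postcomposing the second with a
monomorphism preserves exactness in the middle. -/
lemma exact_splice {Z A B C D : ModuleCat.{0} R} {f : A ⟶ B} {g : B ⟶ C} (h : SES f g)
    (e : Z ⟶ A) [Epi e] (m : C ⟶ D) [Mono m] {p : Z ⟶ B} {q : B ⟶ D} (hp : p = e ≫ f)
    (hq : q = g ≫ m) (w : p ≫ q = 0) : (ShortComplex.mk p q w).Exact := by
  subst hp hq
  obtain ⟨w₀, hS⟩ := h
  have w₁ : (e ≫ f) ≫ g = 0 := by simp [w₀]
  let φ : ShortComplex.mk (e ≫ f) g w₁ ⟶ ShortComplex.mk f g w₀ :=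
    { τ₁ := e, τ₂ := 𝟙 _, τ₃ := 𝟙 _ }
  let ψ : ShortComplex.mk (e ≫ f) g w₁ ⟶ ShortComplex.mk (e ≫ f) (g ≫ m) w :=
    { τ₁ := 𝟙 _, τ₂ := 𝟙 _, τ₃ := m }
  have : Epi φ.τ₁ := inferInstanceAs (Epi e)
  have : IsIso φ.τ₂ := inferInstanceAs (IsIso (𝟙 _))
  have : Mono φ.τ₃ := inferInstanceAs (Mono (𝟙 _))
  have : Epi ψ.τ₁ := inferInstanceAs (Epi (𝟙 _))
  have : IsIso ψ.τ₂ := inferInstanceAs (IsIso (𝟙 _))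
  have : Mono ψ.τ₃ := inferInstanceAs (Mono m)
  rw [← ShortComplex.exact_iff_of_epi_of_isIso_of_mono ψ,
    ShortComplex.exact_iff_of_epi_of_isIso_of_mono φ]
  exact hS.exact

/-- A class that is left orthogonal to `𝓣`, and each of whose members is both a syzygy and a cosyzygy
of members with projective middle term, consists of Gorenstein projectives relative to `𝓣`. -/
lemma isGProj_of_class {𝓣 : Set (ModuleCat.{0} R)} (𝒜 : Set (ModuleCat.{0} R))
    (hT : ∀ X ∈ 𝒜, ∀ T ∈ 𝓣, ExtVanish 1 X T)
    (hl : ∀ X ∈ 𝒜, ∃ Y ∈ 𝒜, ∃ (P : ModuleCat.{0} R) (f : Y ⟶ P) (g : P ⟶ X),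
      Projective P ∧ SES f g)
    (hr : ∀ X ∈ 𝒜, ∃ Y ∈ 𝒜, ∃ (P : ModuleCat.{0} R) (f : X ⟶ P) (g : P ⟶ Y),
      Projective P ∧ SES f g)
    {X : ModuleCat.{0} R} (hX : X ∈ 𝒜) : IsGProj 𝓣 X := by
  obtain ⟨s, hs0, hs⟩ := exists_int_sequence
    (fun Y Z : 𝒜 => ∃ (P : ModuleCat.{0} R) (f : Y.1 ⟶ P) (g : P ⟶ Z.1), Projective P ∧ SES f g)
    (fun Z => by obtain ⟨Y, hY, h⟩ := hl Z.1 Z.2; exact ⟨⟨Y, hY⟩, h⟩)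
    (fun Z => by obtain ⟨Y, hY, h⟩ := hr Z.1 Z.2; exact ⟨⟨Y, hY⟩, h⟩) ⟨X, hX⟩
  choose P a b hP hS using hs
  have ha : ∀ n, Mono (a n) := fun n => (hS n).mono
  have hb : ∀ n, Epi (b n) := fun n => (hS n).epi
  let C : ChainComplex (ModuleCat.{0} R) ℤ := ChainComplex.of P (fun n => b (n + 1) ≫ a n)
    (fun n => by simp [reassoc_of% (hS (n + 1)).zero])
  have hd : ∀ n, C.d (n + 1) n = b (n + 1) ≫ a n := fun n =>
    ChainComplex.of_d P (fun n => b (n + 1) ≫ a n) n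
  have hexact : ∀ n, (C.sc n).Exact := by
    intro n
    obtain ⟨m, rfl⟩ : ∃ m, n = m + 1 := ⟨n - 1, by lia⟩
    refine (HomologicalComplex.exactAt_iff' C (m + 1 + 1) (m + 1) m (by simp) (by simp)).2 ?_
    exact exact_splice (hS (m + 1)) (b (m + 1 + 1)) (a m) (hd _) (hd _) _
  have hhom : ∀ T ∈ 𝓣, ∀ (n k : ℤ) (_ : n = k + 1) (g : C.X n ⟶ T), C.d (n + 1) n ≫ g = 0 →
      ∃ h : C.X k ⟶ T, C.d n k ≫ h = g := by
    rintro T hTT _ k rfl g hg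
    rw [hd, Category.assoc] at hg
    rw [hd]
    obtain ⟨g', hg'⟩ := (hS (k + 1)).desc g (by rw [← cancel_epi (b (k + 1 + 1)), hg, comp_zero])
    obtain ⟨h, hh⟩ := (extVanish_iff_extend (hS k) (hP k)).1
      (hT _ (s k).2 T hTT) g'
    exact ⟨h, by rw [Category.assoc, hh, hg']⟩
  refine ⟨C, ⟨hP, hexact, fun T hTT n g hg => hhom T hTT n (n - 1) (by lia) g hg⟩, -1, ?_⟩
  have key : ∀ k n : ℤ, n = k + 1 → Nonempty ((s (n + 1)).1 ≅ kernel (C.d n k)) := by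
    rintro k _ rfl
    rw [hd]
    exact (hS (k + 1)).kernel_iso (a k)
  have := key (-1 - 1) (-1) (by lia)
  have h0 : (s (-1 + 1)).1 = X := congrArg Subtype.val hs0
  rwa [h0] at this

/-- The short exact sequences into which a totally acyclic complex breaks. -/
lemma totallyAcyclic_ses {𝓣 : Set (ModuleCat.{0} R)} {C : ChainComplex (ModuleCat.{0} R) ℤ}
    (hC : IsTotallyAcyclicWrt 𝓣 C) {i j k : ℤ} (hij : i = j + 1) (hjk : j = k + 1) :
    SES (kernel.ι (C.d i j)) (kernel.lift (C.d j k) (C.d i j) (C.d_comp_d i j k)) := by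
  have ex : (ShortComplex.mk _ _ (C.d_comp_d i j k)).Exact :=
    (HomologicalComplex.exactAt_iff' C i j k (by simp [hij]) (by simp [hjk])).1 (hC.exact j)
  have : Epi (kernel.lift (C.d j k) (C.d i j) (C.d_comp_d i j k)) := ex.epi_kernelLift
  have w : kernel.ι (C.d i j) ≫ kernel.lift (C.d j k) (C.d i j) (C.d_comp_d i j k) = 0 := by
    rw [← cancel_mono (kernel.ι (C.d j k))]
    simp
  refine ⟨w, { exact := ?_, mono_f := inferInstanceAs (Mono (kernel.ι _)), epi_g := this }⟩
  refine ShortComplex.exact_of_f_is_kernel _ (KernelFork.IsLimit.ofι' _ _ fun t ht => ?_)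
  refine ⟨kernel.lift _ t ?_, kernel.lift_ι _ _ _⟩
  have := congrArg (· ≫ kernel.ι (C.d j k)) ht
  simpa using this

lemma SES.iso_left {A A' B C : ModuleCat.{0} R} {f : A ⟶ B} {g : B ⟶ C} (h : SES f g)
    (e : A' ≅ A) : SES (e.hom ≫ f) g := by
  obtain ⟨w, hS⟩ := h
  refine ⟨by simp [w], ?_⟩
  refine ShortComplex.shortExact_of_iso ?_ hS
  exact ShortComplex.isoMk e.symm (Iso.refl _) (Iso.refl _) (by simp) (by simp)

lemma SES.iso_right {A B C C' : ModuleCat.{0} R} {f : A ⟶ B} {g : B ⟶ C} (h : SES f g)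
    (e : C ≅ C') : SES f (g ≫ e.hom) := by
  obtain ⟨w, hS⟩ := h
  refine ⟨by simp [reassoc_of% w], ?_⟩
  refine ShortComplex.shortExact_of_iso ?_ hS
  exact ShortComplex.isoMk (Iso.refl _) (Iso.refl _) e (by simp) (by simp)

lemma IsGProj.exists_cosyzygy {𝓣 : Set (ModuleCat.{0} R)} {X : ModuleCat.{0} R}
    (hX : IsGProj 𝓣 X) : ∃ (Y P : ModuleCat.{0} R) (f : X ⟶ P) (g : P ⟶ Y),
      IsGProj 𝓣 Y ∧ Projective P ∧ SES f g := by
  obtain ⟨C, hC, n, ⟨e⟩⟩ := hX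
  exact ⟨_, _, _, _, ⟨C, hC, n - 1, ⟨Iso.refl _⟩⟩, hC.projective n,
    (totallyAcyclic_ses hC (by lia) (by lia)).iso_left e⟩

lemma IsGProj.extVanish {𝓣 : Set (ModuleCat.{0} R)} {X T : ModuleCat.{0} R}
    (hX : IsGProj 𝓣 X) (hT : T ∈ 𝓣) : ExtVanish 1 X T := by
  obtain ⟨C, hC, n, ⟨e⟩⟩ := hX
  have hS := (totallyAcyclic_ses hC (i := n + 1) (j := n) (k := n - 1)
    (by lia) (by lia)).iso_right e.symm
  refine (extVanish_iff_extend hS (hC.projective _)).2 fun u => ?_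
  have hS' := totallyAcyclic_ses hC (i := n + 1 + 1) (j := n + 1) (k := n) rfl rfl
  have := hS'.epi
  have hex : ∀ k m : ℤ, m = k + 1 → ∀ g : C.X m ⟶ T, C.d (m + 1) m ≫ g = 0 →
      ∃ h : C.X k ⟶ T, C.d m k ≫ h = g := by
    intro k m hm g hg
    obtain rfl : k = m - 1 := by lia
    exact hC.homExact T hT m g hg
  obtain ⟨h, hh⟩ := hex (n + 1) (n + 1 + 1) rfl
    (kernel.lift (C.d (n + 1) n) (C.d (n + 1 + 1) (n + 1)) (C.d_comp_d _ _ _) ≫ u) (by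
      rw [← Category.assoc]
      convert zero_comp
      rw [← cancel_mono (kernel.ι (C.d (n + 1) n))]
      simp)
  refine ⟨h, ?_⟩
  rw [← cancel_epi (kernel.lift (C.d (n + 1) n) (C.d (n + 1 + 1) (n + 1)) (C.d_comp_d _ _ _)), ← hh,
    kernel.lift_ι_assoc]

/-! ### The cotorsion pair generated by `G` -/

open MorphismProperty in
/-- A single monomorphism of modules permits the small object argument: relative cell complexes are
then transfinite compositions of monomorphisms, and in a Grothendieck abelian category every object
is small with respect to those. -/
lemma hasSmallObjectArgument_of_mono {G P : ModuleCat.{0} R} (i : G ⟶ P) [Mono i] :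
    HasSmallObjectArgument.{0} (ofHoms fun _ : Unit => i) := by
  obtain ⟨κ, hκ', hκ⟩ := HasCardinalLT.exists_regular_cardinal.{0} (Subobject G)
  have : Fact κ.IsRegular := ⟨hκ'⟩
  have : Nonempty κ.ord.ToType := by simpa using hκ'.ne_zero
  have := WellFoundedLT.toOrderBot κ.ord.ToType
  have hle : (ofHoms fun _ : Unit => i) ≤ monomorphisms (ModuleCat.{0} R) := by
    rintro _ _ _ ⟨_⟩
    exact inferInstanceAs (Mono i)
  exact ⟨κ, inferInstance, inferInstance,
    { preservesColimit {A B X Y} j hj f hf := by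
        let hf' : (monomorphisms (ModuleCat.{0} R)).TransfiniteCompositionOfShape
            κ.ord.ToType f :=
          { toTransfiniteCompositionOfShape := hf.toTransfiniteCompositionOfShape
            map_mem k hk := by
              have := (hf.attachCells k hk).pushouts_coproducts
              simp only [ofHoms_homFamily] at this
              refine (?_ : _ ≤ monomorphisms (ModuleCat.{0} R)) _ this
              simp only [pushouts_le_iff, coproducts_le_iff]
              exact hle }
        have (k k' : κ.ord.ToType) (φ : k ⟶ k') : Mono (hf'.F.map φ) := hf'.mem_map φ
        obtain ⟨_⟩ := hj
        exact IsGrothendieckAbelian.preservesColimit_coyoneda_obj_of_mono (Y := hf'.F) hκ }⟩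

/-- Dimension shifting in the second variable along an embedding into an injective. -/
lemma extVanish_of_lift {N I N₁ A : ModuleCat.{0} R} {a : N ⟶ I} {b : I ⟶ N₁} (h : SES a b)
    [Injective I] (hA : ∀ y : A ⟶ N₁, ∃ z : A ⟶ I, z ≫ b = y) : ExtVanish 1 A N := by
  obtain ⟨K, Q, k, q, hQ, hS⟩ := exists_presentation A
  refine (extVanish_iff_extend hS hQ).2 fun u => ?_
  have := hS.mono
  have := h.mono
  have hw : k ≫ Injective.factorThru (u ≫ a) k = u ≫ a := Injective.comp_factorThru _ _
  obtain ⟨y, hy⟩ := hS.desc (Injective.factorThru (u ≫ a) k ≫ b)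
    (by rw [reassoc_of% hw, h.zero, comp_zero])
  obtain ⟨z, rfl⟩ := hA y
  obtain ⟨v, hv⟩ := h.lift (Injective.factorThru (u ≫ a) k - q ≫ z) (by simp [hy])
  refine ⟨v, ?_⟩
  rw [← cancel_mono a, Category.assoc, hv, Preadditive.comp_sub, hw, reassoc_of% hS.zero]
  simp

lemma exists_injective_ses (N : ModuleCat.{0} R) : ∃ (I N₁ : ModuleCat.{0} R) (a : N ⟶ I)
    (b : I ⟶ N₁), Injective I ∧ SES a b :=
  ⟨_, _, _, _, Injective.injective_under N, cokernel.condition (Injective.ι N),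
    { exact := ShortComplex.exact_of_g_is_cokernel _ (cokernelIsCokernel _) }⟩

section Periodic

variable {G P : ModuleCat.{0} R} {i : G ⟶ P} {π : P ⟶ G}

/-- An epimorphism with kernel in `G^⊥` has the right lifting property with respect to
`i : G ⟶ P`. -/
lemma hasLiftingProperty_of_ses (hG : SES i π) (hP : Projective P) {N E F : ModuleCat.{0} R}
    {a : N ⟶ E} {b : E ⟶ F} (h : SES a b) (hN : ExtVanish 1 G N) : HasLiftingProperty i b := by
  refine ⟨fun {u v} sq => ?_⟩
  have := h.epi
  have hv : Projective.factorThru v b ≫ b = v := Projective.factorThru_comp _ _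
  obtain ⟨t, ht⟩ := h.lift (u - i ≫ Projective.factorThru v b) (by simp [hv, sq.w])
  obtain ⟨t', rfl⟩ := (extVanish_iff_extend hG hP).1 hN t
  refine ⟨⟨⟨Projective.factorThru v b + t' ≫ a, ?_, ?_⟩⟩⟩
  · rw [Preadditive.comp_add, ← Category.assoc i t' a, ht]; simp
  · simp [hv, h.zero]

open ZeroObject in
/-- Every module embeds in a module of `G^⊥` with cokernel in `^⊥(G^⊥)`. -/
lemma exists_special_preenvelope (hG : SES i π) (hP : Projective P) (X : ModuleCat.{0} R) :
    ∃ (B A : ModuleCat.{0} R) (j : X ⟶ B) (q : B ⟶ A), SES j q ∧ ExtVanish 1 G B ∧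
      ∀ N, ExtVanish 1 G N → ExtVanish 1 A N := by
  have := hG.mono
  have := hasSmallObjectArgument_of_mono i
  let W := MorphismProperty.ofHoms fun _ : Unit => i
  have hW : W i := MorphismProperty.ofHoms.mk ()
  let D := (MorphismProperty.functorialFactorizationData W.rlp.llp W.rlp).factorizationData
    (0 : X ⟶ 0)
  -- Right lifting against `i` for the map from `D.Z` to the zero object says exactly that
  -- `D.Z ∈ G^⊥`.
  have hB : ∀ g : G ⟶ D.Z, ∃ v : P ⟶ D.Z, i ≫ v = g := by
    intro g
    have := D.hp i hW
    have sq : CommSq g i D.p 0 := ⟨(isZero_zero _).eq_of_tgt _ _⟩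
    exact ⟨sq.lift, sq.fac_left⟩
  -- `X` embeds in an injective `E`, and `E ⟶ 0` lifts against the monomorphism `i`; so the
  -- embedding factors through `D.i`.
  have hj : Mono D.i := by
    have hE : W.rlp (0 : Injective.under X ⟶ (0 : ModuleCat.{0} R)) := by
      rintro _ _ _ ⟨_⟩
      refine ⟨fun {u v} sq => ⟨⟨⟨Injective.factorThru u i, Injective.comp_factorThru _ _,
        (isZero_zero _).eq_of_tgt _ _⟩⟩⟩⟩
    have := D.hi _ hE
    have sq : CommSq (Injective.ι X) D.i (0 : Injective.under X ⟶ (0 : ModuleCat.{0} R)) 0 :=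
      ⟨(isZero_zero _).eq_of_tgt _ _⟩
    have : Mono (D.i ≫ sq.lift) := by rw [sq.fac_left]; infer_instance
    exact mono_of_mono D.i sq.lift
  have hS : SES D.i (cokernel.π D.i) := ⟨cokernel.condition _,
    { exact := ShortComplex.exact_of_g_is_cokernel _ (cokernelIsCokernel _) }⟩
  refine ⟨D.Z, _, D.i, _, hS, (extVanish_iff_extend hG hP).2 hB, fun N hN => ?_⟩
  obtain ⟨I, N₁, a, b, hI, hab⟩ := exists_injective_ses N
  refine extVanish_of_lift hab fun y => ?_
  -- A lift of `y` is a map `D.Z ⟶ I` over `y` that vanishes on `X`; it exists since `b` is an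
  -- epimorphism with kernel in `G^⊥`.
  have hb : W.rlp b := by
    rintro _ _ _ ⟨_⟩
    exact hasLiftingProperty_of_ses hG hP hab hN
  have := D.hi b hb
  have sq : CommSq 0 D.i b (cokernel.π D.i ≫ y) := ⟨by simp⟩
  obtain ⟨z, hz⟩ := hS.desc sq.lift sq.fac_left
  have := hS.epi
  exact ⟨z, by rw [← cancel_epi (cokernel.π D.i), ← Category.assoc, hz, sq.fac_right]⟩

/-- `G^⊥` is closed under kernels of epimorphisms between its members. Periodicity is what allows
it: `Ext¹(G, K)` and `Ext²(G, K)` vanish together. -/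
lemma extVanish_kernel (hG : SES i π) (hP : Projective P) {K Q X : ModuleCat.{0} R}
    {a : K ⟶ Q} {b : Q ⟶ X} (h : SES a b) (hQ : ExtVanish 1 G Q) (hX : ExtVanish 1 G X) :
    ExtVanish 1 G K := by
  rw [extVanish_iff_extend hG hP] at hQ hX ⊢
  intro g
  have := h.epi
  have := h.mono
  obtain ⟨e, he⟩ := hQ (g ≫ a)
  obtain ⟨t, ht⟩ := hG.desc (e ≫ b) (by rw [reassoc_of% he, h.zero, comp_zero])
  obtain ⟨t', rfl⟩ := hX t
  have hl : Projective.factorThru t' b ≫ b = t' := Projective.factorThru_comp _ _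
  obtain ⟨v, hv⟩ := h.lift (e - π ≫ i ≫ Projective.factorThru t' b) (by simp [hl, ht])
  refine ⟨v, ?_⟩
  rw [← cancel_mono a, Category.assoc, hv, Preadditive.comp_sub, he, reassoc_of% hG.zero]
  simp

/-- `G^⊥` is closed under cosyzygies: `Ext¹(G, N₁)` embeds in `Ext²(G, N)`, which by periodicity
vanishes with `Ext¹(G, N)`. -/
lemma extVanish_cokernel_injective (hG : SES i π) (hP : Projective P) {N I N₁ : ModuleCat.{0} R}
    {a : N ⟶ I} {b : I ⟶ N₁} (h : SES a b) (hI : Injective I) (hN : ExtVanish 1 G N) :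
    ExtVanish 1 G N₁ := by
  rw [extVanish_iff_extend hG hP] at hN ⊢
  intro g
  have := h.epi
  have := hG.mono
  have := hG.epi
  have hl : Projective.factorThru (π ≫ g) b ≫ b = π ≫ g := Projective.factorThru_comp _ _
  obtain ⟨t, ht⟩ := h.lift (i ≫ Projective.factorThru (π ≫ g) b)
    (by rw [Category.assoc, hl, reassoc_of% hG.zero, zero_comp])
  obtain ⟨t', rfl⟩ := hN t
  obtain ⟨y, hy⟩ := hG.desc (Projective.factorThru (π ≫ g) b - t' ≫ a)
    (by rw [Preadditive.comp_sub, ← ht, Category.assoc, sub_self])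
  have hy' : y ≫ b = g := by
    rw [← cancel_epi π, reassoc_of% hy]
    simp [hl, h.zero]
  exact ⟨Injective.factorThru y i ≫ b, by rw [← Category.assoc, Injective.comp_factorThru, hy']⟩

/-- `^⊥(G^⊥)` is closed under syzygies. -/
lemma leftPerp_syzygy (hG : SES i π) (hP : Projective P) {K Q X : ModuleCat.{0} R}
    {k : K ⟶ Q} {q : Q ⟶ X} (h : SES k q) (hQ : Projective Q)
    (hX : ∀ N, ExtVanish 1 G N → ExtVanish 1 X N) (N : ModuleCat.{0} R)
    (hN : ExtVanish 1 G N) : ExtVanish 1 K N := by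
  obtain ⟨I, N₁, a, b, hI, hab⟩ := exists_injective_ses N
  refine extVanish_of_lift hab fun y => ?_
  obtain ⟨v, rfl⟩ := (extVanish_iff_extend h hQ).1
    (hX N₁ (extVanish_cokernel_injective hG hP hab hI hN)) y
  have := hab.epi
  exact ⟨k ≫ Projective.factorThru v b, by rw [Category.assoc, Projective.factorThru_comp]⟩

lemma extVanish_extension {A B C N : ModuleCat.{0} R} {f : A ⟶ B} {g : B ⟶ C} (h : SES f g)
    (hA : ExtVanish 1 A N) (hC : ExtVanish 1 C N) : ExtVanish 1 B N := by
  rw [extVanish_iff] at *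
  refine subsingleton_of_forall_eq 0 fun e => ?_
  obtain ⟨x, rfl⟩ := Abelian.Ext.contravariant_sequence_exact₂ h.2 N e (Subsingleton.elim _ _)
  rw [Subsingleton.elim x 0, Abelian.Ext.comp_zero]

lemma projective_of_leftPerp_inter (hG : SES i π) (hP : Projective P)
    (hproj : ∀ Q : ModuleCat.{0} R, Projective Q → ExtVanish 1 G Q) {X : ModuleCat.{0} R}
    (hX : ∀ N, ExtVanish 1 G N → ExtVanish 1 X N) (hX' : ExtVanish 1 G X) : Projective X := by
  obtain ⟨K, Q, k, q, hQ, h⟩ := exists_presentation X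
  obtain ⟨s, hs⟩ := exists_section h (hX K (extVanish_kernel hG hP h (hproj Q hQ) hX'))
  exact projective_of_retract hQ s q hs

end Periodic

/-! ### Membership in `GP` -/

/-- A strongly Gorenstein projective module sits in a periodic sequence `0 → G → P → G → 0`, and is
left orthogonal to `𝓣`. -/
lemma IsSGProj.exists_ses {𝓣 : Set (ModuleCat.{0} R)} {G : ModuleCat.{0} R}
    (hG : IsSGProj 𝓣 G) : ∃ (P : ModuleCat.{0} R) (i : G ⟶ P) (π : P ⟶ G), Projective P ∧
      SES i π ∧ ∀ T ∈ 𝓣, ExtVanish 1 G T := by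
  obtain ⟨P, f, hP, ⟨w, ex⟩, hT, ⟨e⟩⟩ := hG
  let c : P ⟶ kernel f := kernel.lift f f w
  have hc : Epi c := ex.epi_kernelLift
  have w' : kernel.ι f ≫ c = 0 := by rw [← cancel_mono (kernel.ι f)]; simp [c]
  have hS : SES (kernel.ι f) c := by
    refine ⟨w', { exact := ?_, mono_f := inferInstanceAs (Mono (kernel.ι _)), epi_g := hc }⟩
    refine ShortComplex.exact_of_f_is_kernel _ (KernelFork.IsLimit.ofι' _ _ fun t ht => ?_)
    refine ⟨kernel.lift _ t ?_, kernel.lift_ι _ _ _⟩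
    have := congrArg (· ≫ kernel.ι f) ht
    simpa [c] using this
  have hS' := (hS.iso_left e).iso_right e.symm
  refine ⟨P, _, _, hP, hS', fun T hTT => (extVanish_iff_extend hS' hP).2 fun u => ?_⟩
  obtain ⟨h, hh⟩ := hT T hTT (c ≫ e.inv ≫ u) (by
    have : f ≫ c = 0 := by rw [← cancel_mono (kernel.ι f)]; simp [c, w]
    rw [reassoc_of% this, zero_comp])
  refine ⟨h, ?_⟩
  rw [← cancel_epi e.inv, ← cancel_epi c, ← hh]
  simp [c]

lemma isGProj_of_isSGProj {𝓣 : Set (ModuleCat.{0} R)} {G : ModuleCat.{0} R}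
    (hG : IsSGProj 𝓣 G) : IsGProj 𝓣 G := by
  obtain ⟨P, i, π, hP, hS, hT⟩ := hG.exists_ses
  refine isGProj_of_class {G} ?_ ?_ ?_ rfl
  · rintro _ rfl; exact hT
  · rintro _ rfl; exact ⟨_, rfl, P, i, π, hP, hS⟩
  · rintro _ rfl; exact ⟨_, rfl, P, i, π, hP, hS⟩

open ZeroObject in
lemma isGProj_of_projective {𝓣 : Set (ModuleCat.{0} R)} {P : ModuleCat.{0} R}
    (hP : Projective P) : IsGProj 𝓣 P := by
  refine isGProj_of_class {Q | Projective Q} (fun Q hQ T _ => extVanish_of_projective hQ)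
    (fun Q hQ => ?_) (fun Q hQ => ?_) hP
  · exact ⟨0, inferInstanceAs (Projective (0 : ModuleCat.{0} R)), Q, 0, 𝟙 Q, hQ, zero_comp,
      { exact := (ShortComplex.exact_iff_mono _ rfl).2 (inferInstanceAs (Mono (𝟙 Q)))
        mono_f := inferInstanceAs (Mono (0 : (0 : ModuleCat.{0} R) ⟶ Q))
        epi_g := inferInstanceAs (Epi (𝟙 Q)) }⟩
  · exact ⟨0, inferInstanceAs (Projective (0 : ModuleCat.{0} R)), Q, 𝟙 Q, 0, hQ, comp_zero,
      { exact := (ShortComplex.exact_iff_epi _ rfl).2 (inferInstanceAs (Epi (𝟙 Q)))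
        mono_f := inferInstanceAs (Mono (𝟙 Q))
        epi_g := inferInstanceAs (Epi (0 : Q ⟶ (0 : ModuleCat.{0} R))) }⟩

theorem stmt19
    (R : Type) [Ring R] (𝓛 : Set (ModuleCat.{0} R)) (𝓐 : Set (ModuleCat.{0} Rᵐᵒᵖ))
    (hdp : CompleteDualityPair 𝓛 𝓐) (G : ModuleCat.{0} R) (hG : IsSGProj 𝓛 G) :
    ({X : ModuleCat.{0} R | ∀ N, ExtVanish 1 G N → ExtVanish 1 X N} ⊆
        {X : ModuleCat.{0} R | IsGProj 𝓛 X}) ∧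
    ({N : ModuleCat.{0} R | ∀ X, IsGProj 𝓛 X → ExtVanish 1 X N} ⊆
        {N : ModuleCat.{0} R | ExtVanish 1 G N}) ∧
    ({X : ModuleCat.{0} R | IsGProj 𝓛 X} ∩
        {N : ModuleCat.{0} R | ∀ X, IsGProj 𝓛 X → ExtVanish 1 X N} =
      {P : ModuleCat.{0} R | Projective P}) ∧
    ({X : ModuleCat.{0} R | ∀ N, ExtVanish 1 G N → ExtVanish 1 X N} ∩
        {N : ModuleCat.{0} R | ExtVanish 1 G N} =
      {P : ModuleCat.{0} R | Projective P}) := by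
  obtain ⟨P, i, π, hP, hS, hT⟩ := hG.exists_ses
  have hproj : ∀ Q : ModuleCat.{0} R, Projective Q → ExtVanish 1 G Q :=
    fun Q hQ => hT Q (projective_mem hdp hQ)
  refine ⟨?_, fun N hN => hN G (isGProj_of_isSGProj hG), ?_, ?_⟩
  · intro X hX
    refine isGProj_of_class {X | ∀ N, ExtVanish 1 G N → ExtVanish 1 X N}
      (fun X hX T hTT => hX T (hT T hTT)) (fun X hX => ?_) (fun X hX => ?_) hX
    · obtain ⟨K, Q, k, q, hQ, h⟩ := exists_presentation X
      exact ⟨K, leftPerp_syzygy hS hP h hQ hX, Q, k, q, hQ, h⟩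
    · obtain ⟨B, A, j, q, h, hB, hA⟩ := exists_special_preenvelope hS hP X
      exact ⟨A, hA, B, j, q, projective_of_leftPerp_inter hS hP hproj
        (fun N hN => extVanish_extension h (hX N hN) (hA N hN)) hB, h⟩
  · ext X
    constructor
    · rintro ⟨hX, hX'⟩
      obtain ⟨Y, Q, f, g, hY, hQ, h⟩ := IsGProj.exists_cosyzygy hX
      obtain ⟨r, hr⟩ := exists_retraction h (hX' Y hY)
      exact projective_of_retract hQ f r hr
    · intro hX
      exact ⟨isGProj_of_projective hX, fun Y hY => hY.extVanish (projective_mem hdp hX)⟩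
  · ext X
    constructor
    · rintro ⟨hX, hX'⟩
      exact projective_of_leftPerp_inter hS hP hproj hX hX'
    · intro hX
      exact ⟨fun N _ => extVanish_of_projective hX, hproj X hX⟩

end DualityPaper
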